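/- Two-state Lax–Friedrichs-type estimate (Corollary 2.5): Let d ∈ {1,2,3}, let U, Ũ ∈ 𝒢 with magnetic fields B, B̃, and let ξ ∈ ℝ^d be a unit vector. For every α ≥ α_⋆(U, Ũ; ξ) and every α̃ ≥ α_⋆(Ũ, U; ξ), one has α + α̃ > 0, and the state Ū = (α + α̃)⁻¹ (αU − ⟨ξ, F(U)⟩ + α̃Ũ + ⟨ξ, F(Ũ)⟩) has positive density component and satisfies, for all v*, B* ∈ ℝ³, Ū·n* + |B*|²/2 + (v*·B*)(α + α̃)⁻¹(⟨ξ, B⟩ − ⟨ξ, B̃⟩) ≥ 0. Furthermore, if ⟨ξ, B⟩ = ⟨ξ, B̃⟩ then Ū ∈ cl(𝒢*). -/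

import Mathlib

noncomputable section

open Finset

/-- An MHD state `U = (ρ, m, B, E)` viewed as a vector in `ℝ⁸`. -/
abbrev MHDState := Fin 8 → ℝ

namespace MHD

/-- Build a state from density, momentum, magnetic field, total energy. -/
def mk (ρ : ℝ) (m B : Fin 3 → ℝ) (E : ℝ) : MHDState :=
  ![ρ, m 0, m 1, m 2, B 0, B 1, B 2, E]

/-- Density component. -/
def dens (U : MHDState) : ℝ := U 0

/-- Momentum components. -/
def mom (U : MHDState) : Fin 3 → ℝ := ![U 1, U 2, U 3]

/-- Magnetic field components. -/
def magB (U : MHDState) : Fin 3 → ℝ := ![U 4, U 5, U 6]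

/-- Total energy component. -/
def toten (U : MHDState) : ℝ := U 7

/-- Euclidean dot product on `ℝ³`. -/
def dot3 (a b : Fin 3 → ℝ) : ℝ := ∑ k, a k * b k

/-- Squared Euclidean norm on `ℝ³`. -/
def sq3 (a : Fin 3 → ℝ) : ℝ := dot3 a a

/-- Euclidean norm on `ℝ³`. -/
def norm3 (a : Fin 3 → ℝ) : ℝ := Real.sqrt (sq3 a)

/-- Velocity `v = m / ρ`. -/
def vel (U : MHDState) : Fin 3 → ℝ := fun k => mom U k / dens U

/-- Internal energy `𝓔(U) = E − (|m|²/ρ + |B|²)/2`. -/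
def intE (U : MHDState) : ℝ := toten U - (sq3 (mom U) / dens U + sq3 (magB U)) / 2

/-- Specific internal energy `e = 𝓔(U)/ρ`. -/
def specE (U : MHDState) : ℝ := intE U / dens U

/-- The admissible state set `𝒢`. -/
def Gset : Set MHDState := {U | 0 < dens U ∧ 0 < intE U}

/-- The set `𝒢_ρ` of states with positive density. -/
def Grho : Set MHDState := {U | 0 < dens U}

/-- Euclidean dot product on `ℝ⁸`. -/
def dot8 (U V : MHDState) : ℝ := ∑ i, U i * V i

/-- The vector `n* = (|v*|²/2, −v*, −B*, 1)`. -/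
def nstar (vs Bs : Fin 3 → ℝ) : MHDState :=
  mk (sq3 vs / 2) (fun k => -vs k) (fun k => -Bs k) 1

/-- The set `𝒢*`. -/
def GstarSet : Set MHDState :=
  {U | 0 < dens U ∧ ∀ vs Bs : Fin 3 → ℝ, 0 < dot8 U (nstar vs Bs) + sq3 Bs / 2}

/-- Equation of state assumption: for `ρ > 0`, `e > 0 ↔ p(ρ,e) > 0`. -/
def IsEOS (pfun : ℝ → ℝ → ℝ) : Prop :=
  ∀ ρ e : ℝ, 0 < ρ → (0 < e ↔ 0 < pfun ρ e)

/-- Pressure of a state, via the equation of state. -/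
def pres (pfun : ℝ → ℝ → ℝ) (U : MHDState) : ℝ := pfun (dens U) (specE U)

/-- Total pressure `p + |B|²/2`. -/
def ptot (pfun : ℝ → ℝ → ℝ) (U : MHDState) : ℝ := pres pfun U + sq3 (magB U) / 2

/-- The `i`-th flux `F_i(U)`. -/
def flux (pfun : ℝ → ℝ → ℝ) (i : Fin 3) (U : MHDState) : MHDState :=
  mk (dens U * vel U i)
    (fun k => dens U * vel U i * vel U k - magB U i * magB U k
      + ptot pfun U * (if k = i then 1 else 0))
    (fun k => vel U i * magB U k - magB U i * vel U k)
    (vel U i * (toten U + ptot pfun U) - magB U i * dot3 (vel U) (magB U))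

/-- Directional inner product `⟨ξ, w⟩ = Σ_{k<d} ξ_k w_k` for `ξ ∈ ℝ^d`, `w ∈ ℝ³`, `d ≤ 3`. -/
def dirDot {d : ℕ} (hd : d ≤ 3) (ξ : Fin d → ℝ) (w : Fin 3 → ℝ) : ℝ :=
  ∑ k, ξ k * w (Fin.castLE hd k)

/-- Directional flux `⟨ξ, F(U)⟩ = Σ_{i<d} ξ_i F_i(U)`. -/
def dirFlux (pfun : ℝ → ℝ → ℝ) {d : ℕ} (hd : d ≤ 3) (ξ : Fin d → ℝ) (U : MHDState) :
    MHDState :=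
  ∑ i, ξ i • flux pfun (Fin.castLE hd i) U

/-- `ξ` is a unit vector. -/
def unitVec {d : ℕ} (ξ : Fin d → ℝ) : Prop := (∑ k, (ξ k) ^ 2) = 1

/-- `𝒞_s(U) = p / (ρ √(2e))`. -/
def soundC (pfun : ℝ → ℝ → ℝ) (U : MHDState) : ℝ :=
  pres pfun U / (dens U * Real.sqrt (2 * specE U))

/-- `𝒞(U; ξ)`. -/
def waveC (pfun : ℝ → ℝ → ℝ) {d : ℕ} (hd : d ≤ 3) (ξ : Fin d → ℝ) (U : MHDState) : ℝ :=
  Real.sqrt ((soundC pfun U ^ 2 + sq3 (magB U) / dens U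
    + Real.sqrt ((soundC pfun U ^ 2 + sq3 (magB U) / dens U) ^ 2
      - 4 * soundC pfun U ^ 2 * dirDot hd ξ (magB U) ^ 2 / dens U)) / 2)

/-- Roe-type averaged velocity `v̄ = (√ρ v + √ρ̃ ṽ)/(√ρ + √ρ̃)`. -/
def roeV (U Ut : MHDState) : Fin 3 → ℝ := fun k =>
  (Real.sqrt (dens U) * vel U k + Real.sqrt (dens Ut) * vel Ut k)
    / (Real.sqrt (dens U) + Real.sqrt (dens Ut))

/-- `α_r(U, Ũ; ξ)`. -/
def alphaR (pfun : ℝ → ℝ → ℝ) {d : ℕ} (hd : d ≤ 3) (ξ : Fin d → ℝ) (U Ut : MHDState) : ℝ :=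
  max (dirDot hd ξ (vel U)) (dirDot hd ξ (roeV U Ut)) + waveC pfun hd ξ U
    + norm3 (magB U - magB Ut) / (Real.sqrt (dens U) + Real.sqrt (dens Ut))

/-- `α_l(U, Ũ; ξ)`. -/
def alphaL (pfun : ℝ → ℝ → ℝ) {d : ℕ} (hd : d ≤ 3) (ξ : Fin d → ℝ) (U Ut : MHDState) : ℝ :=
  min (dirDot hd ξ (vel U)) (dirDot hd ξ (roeV U Ut)) - waveC pfun hd ξ U
    - norm3 (magB U - magB Ut) / (Real.sqrt (dens U) + Real.sqrt (dens Ut))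

/-- `α_⋆(U, Ũ; ξ)`. -/
def alphaS (pfun : ℝ → ℝ → ℝ) {d : ℕ} (hd : d ≤ 3) (ξ : Fin d → ℝ) (U Ut : MHDState) : ℝ :=
  max (|dirDot hd ξ (vel U)|) (|dirDot hd ξ (roeV U Ut)|) + waveC pfun hd ξ U
    + norm3 (magB U - magB Ut) / (Real.sqrt (dens U) + Real.sqrt (dens Ut))

/-- The vector `θ(U, v*, B*) = 2^{−1/2}(B − B*, √ρ(v − v*), √(2ρe)) ∈ ℝ⁷`. -/
def theta (U : MHDState) (vs Bs : Fin 3 → ℝ) : Fin 7 → ℝ :=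
  ![(magB U 0 - Bs 0) / Real.sqrt 2,
    (magB U 1 - Bs 1) / Real.sqrt 2,
    (magB U 2 - Bs 2) / Real.sqrt 2,
    Real.sqrt (dens U) * (vel U 0 - vs 0) / Real.sqrt 2,
    Real.sqrt (dens U) * (vel U 1 - vs 1) / Real.sqrt 2,
    Real.sqrt (dens U) * (vel U 2 - vs 2) / Real.sqrt 2,
    Real.sqrt (2 * intE U) / Real.sqrt 2]

/-- `|θ|²`. -/
def thetaSq (U : MHDState) (vs Bs : Fin 3 → ℝ) : ℝ := ∑ k, theta U vs Bs k ^ 2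

/-- Godunov–Powell source vector `S(U) = (0, B, v, v·B)`. -/
def source (U : MHDState) : MHDState := mk 0 (magB U) (vel U) (dot3 (vel U) (magB U))

/-- HLL numerical flux with clamped wave speeds `σm ≤ 0 ≤ σp`. -/
def hllFlux (pfun : ℝ → ℝ → ℝ) {d : ℕ} (hd : d ≤ 3) (ξ : Fin d → ℝ)
    (Um Up : MHDState) (σm σp : ℝ) : MHDState :=
  (σp - σm)⁻¹ • (σp • dirFlux pfun hd ξ Um - σm • dirFlux pfun hd ξ Up
    + (σm * σp) • (Up - Um))

/-- HLL intermediate state `H(U⁻, U⁺; ξ)`. -/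
def hllMid (pfun : ℝ → ℝ → ℝ) {d : ℕ} (hd : d ≤ 3) (ξ : Fin d → ℝ)
    (Um Up : MHDState) (σm σp : ℝ) : MHDState :=
  (σp - σm)⁻¹ • (σp • Up - dirFlux pfun hd ξ Up - σm • Um + dirFlux pfun hd ξ Um)

/-- The quantity `α̂_j` of Theorem 2.3. -/
def alphaHat (pfun : ℝ → ℝ → ℝ) {d : ℕ} (hd : d ≤ 3) {N : ℕ}
    (s : Fin N → ℝ) (ξ : Fin N → Fin d → ℝ) (U : Fin N → MHDState) (j : Fin N) : ℝ :=
  max (dirDot hd (ξ j) (vel (U j)))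
      ((∑ i, s i)⁻¹ * ∑ i, s i * dirDot hd (fun k => ξ j k - ξ i k) (roeV (U j) (U i)))
  + waveC pfun hd (ξ j) (U j)
  + 2 * (∑ i, s i)⁻¹ * ∑ i, s i *
      (norm3 (magB (U j) - magB (U i)) / (Real.sqrt (dens (U j)) + Real.sqrt (dens (U i))))

def d1le3 : (1 : ℕ) ≤ 3 := by omega
def d2le3 : (2 : ℕ) ≤ 3 := by omega

/-- In one dimension the direction `ξ = 1`. -/
def xi1 : Fin 1 → ℝ := fun _ => 1

/-!
Pairing with `n*` turns the states into the energies `|θ|²` and each flux `⟨ξ, F(U)⟩` into three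
parts: transport of the non-magnetic part of `|θ|²` with speed `⟨ξ, v⟩`, transport of the magnetic
part `|B - B*|² / 2` with speed `⟨ξ, v*⟩`, and the work of pressure and magnetic stress. The last
one is a quadratic form in `θ` whose largest eigenvalue is the fast wave speed `𝒞`. In the second
one the uncontrolled `v*` is replaced by the Roe velocity `v̄`, common to both states; the error is
`⟨ξ, v* - v̄⟩` times the jump of the magnetic energy. Since `(√ρ + √ρ̃)(v̄ - v*)` is the sum of the
weighted relative velocities `√ρ (v - v*)` and `√ρ̃ (ṽ - v*)`, the error is at most
`|B - B̃| / (√ρ + √ρ̃)` times the total energy. Only one-sided speed bounds enter, so the estimate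
holds for the HLL intermediate state with signed speeds, of which `Ū` is the case
`σ⁻ = -α̃`, `σ⁺ = α`.
-/

section InnerProductSpace

open scoped RealInnerProductSpace

variable {E : Type*} [NormedAddCommGroup E] [InnerProductSpace ℝ E] {x : E}

lemma inner_sub_inner_smul_sub_inner_smul (hx : ‖x‖ = 1) (b c : E) :
    ⟪b - ⟪x, b⟫ • x, c - ⟪x, c⟫ • x⟫ = ⟪b, c⟫ - ⟪x, b⟫ * ⟪x, c⟫ := by
  simp only [inner_sub_left, inner_sub_right, real_inner_smul_left, real_inner_smul_right,
    real_inner_self_eq_norm_sq, hx, real_inner_comm x b]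
  ring

lemma norm_sub_inner_smul_sq (hx : ‖x‖ = 1) (b : E) :
    ‖b - ⟪x, b⟫ • x‖ ^ 2 = ‖b‖ ^ 2 - ⟪x, b⟫ ^ 2 := by
  rw [← real_inner_self_eq_norm_sq, inner_sub_inner_smul_sub_inner_smul hx,
    real_inner_self_eq_norm_sq, sq ⟪x, b⟫]

lemma inner_sub_inner_smul_self (hx : ‖x‖ = 1) (c : E) : ⟪x, c - ⟪x, c⟫ • x⟫ = 0 := by
  rw [inner_sub_right, real_inner_smul_right, real_inner_self_eq_norm_sq, hx]
  ring

lemma binary_form_le {A D h l : ℝ} (hA : A ≤ l) (hD : D ≤ l) (hdet : h ^ 2 ≤ (l - A) * (l - D))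
    (s t : ℝ) : A * s ^ 2 + 2 * h * (s * t) + D * t ^ 2 ≤ l * (s ^ 2 + t ^ 2) := by
  have hp : 0 ≤ (l - A) * s ^ 2 := mul_nonneg (sub_nonneg.2 hA) (sq_nonneg s)
  have hq : 0 ≤ (l - D) * t ^ 2 := mul_nonneg (sub_nonneg.2 hD) (sq_nonneg t)
  have hsq : (2 * h * (s * t)) ^ 2 ≤ ((l - A) * s ^ 2 + (l - D) * t ^ 2) ^ 2 :=
    calc (2 * h * (s * t)) ^ 2 = 4 * (s * t) ^ 2 * h ^ 2 := by ring
      _ ≤ 4 * (s * t) ^ 2 * ((l - A) * (l - D)) := by gcongr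
      _ = 4 * ((l - A) * s ^ 2) * ((l - D) * t ^ 2) := by ring
      _ ≤ _ := four_mul_le_sq_add _ _
  linarith [(abs_le_of_sq_le_sq' hsq (add_nonneg hp hq)).2]

/- With `c'` and `b'` the components orthogonal to `x`, the vector is
`(a s + ⟪b', c'⟫) x - ⟪x, b⟫ c'`, so its square is at most the binary form with matrix
`[[a², |a| ‖b'‖], [|a| ‖b'‖, ‖b‖²]]` evaluated at `(|s|, ‖c'‖)`. -/
lemma norm_smul_sub_smul_sq_le (hx : ‖x‖ = 1) {a l : ℝ} {b : E} (ha : a ^ 2 ≤ l)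
    (hb : ‖b‖ ^ 2 ≤ l) (hdet : a ^ 2 * (‖b‖ ^ 2 - ⟪x, b⟫ ^ 2) ≤ (l - a ^ 2) * (l - ‖b‖ ^ 2))
    (s : ℝ) (c : E) :
    ‖(a * s + ⟪b, c⟫) • x - ⟪x, b⟫ • c‖ ^ 2 ≤ l * (s ^ 2 + ‖c‖ ^ 2) := by
  set b' := b - ⟪x, b⟫ • x with hb'
  set c' := c - ⟪x, c⟫ • x with hc'
  have hnb : ‖b'‖ ^ 2 = ‖b‖ ^ 2 - ⟪x, b⟫ ^ 2 := norm_sub_inner_smul_sq hx b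
  have hnc : ‖c'‖ ^ 2 = ‖c‖ ^ 2 - ⟪x, c⟫ ^ 2 := norm_sub_inner_smul_sq hx c
  have hsplit : (a * s + ⟪b, c⟫) • x - ⟪x, b⟫ • c
      = (a * s + ⟪b', c'⟫) • x - ⟪x, b⟫ • c' := by
    rw [hb', hc', inner_sub_inner_smul_sub_inner_smul hx]
    module
  have hpyth : ‖(a * s + ⟪b', c'⟫) • x - ⟪x, b⟫ • c'‖ ^ 2
      = (a * s + ⟪b', c'⟫) ^ 2 + ⟪x, b⟫ ^ 2 * ‖c'‖ ^ 2 := by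
    rw [norm_sub_sq_real, real_inner_smul_left, real_inner_smul_right,
      inner_sub_inner_smul_self hx, norm_smul, norm_smul, mul_pow, mul_pow, hx,
      Real.norm_eq_abs, Real.norm_eq_abs, sq_abs, sq_abs]
    ring
  have hcoef : |a * s + ⟪b', c'⟫| ≤ |a| * |s| + ‖b'‖ * ‖c'‖ :=
    (abs_add_le _ _).trans (add_le_add (abs_mul a s).le (abs_real_inner_le_norm b' c'))
  have hform := binary_form_le (h := |a| * ‖b'‖) ha hb (by rwa [mul_pow, sq_abs, hnb])
    |s| ‖c'‖
  have hl : 0 ≤ l := (sq_nonneg a).trans ha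
  calc ‖(a * s + ⟪b, c⟫) • x - ⟪x, b⟫ • c‖ ^ 2
      = |a * s + ⟪b', c'⟫| ^ 2 + ⟪x, b⟫ ^ 2 * ‖c'‖ ^ 2 := by rw [hsplit, hpyth, sq_abs]
    _ ≤ (|a| * |s| + ‖b'‖ * ‖c'‖) ^ 2 + ⟪x, b⟫ ^ 2 * ‖c'‖ ^ 2 := by gcongr
    _ = a ^ 2 * |s| ^ 2 + 2 * (|a| * ‖b'‖) * (|s| * ‖c'‖) + ‖b‖ ^ 2 * ‖c'‖ ^ 2 := by
      linear_combination |s| ^ 2 * sq_abs a + ‖c'‖ ^ 2 * hnb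
    _ ≤ l * (|s| ^ 2 + ‖c'‖ ^ 2) := hform
    _ ≤ l * (s ^ 2 + ‖c‖ ^ 2) := by
      rw [sq_abs, hnc]
      gcongr
      exact sub_le_self _ (sq_nonneg _)

lemma abs_wave_form_le (hx : ‖x‖ = 1) {a C : ℝ} {b : E} (hC : 0 ≤ C) (ha : a ^ 2 ≤ C ^ 2)
    (hb : ‖b‖ ^ 2 ≤ C ^ 2)
    (hdet : a ^ 2 * (‖b‖ ^ 2 - ⟪x, b⟫ ^ 2) ≤ (C ^ 2 - a ^ 2) * (C ^ 2 - ‖b‖ ^ 2))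
    (s : ℝ) (c w : E) :
    |(a * s + ⟪b, c⟫) * ⟪x, w⟫ - ⟪x, b⟫ * ⟪w, c⟫|
      ≤ C * ((‖c‖ ^ 2 + ‖w‖ ^ 2 + s ^ 2) / 2) := by
  set M := (a * s + ⟪b, c⟫) • x - ⟪x, b⟫ • c with hM
  have hnorm : ‖M‖ ≤ C * √(s ^ 2 + ‖c‖ ^ 2) := by
    refine le_of_sq_le_sq ?_ (by positivity)
    rw [mul_pow, Real.sq_sqrt (by positivity)]
    exact norm_smul_sub_smul_sq_le hx ha hb hdet s c
  calc |(a * s + ⟪b, c⟫) * ⟪x, w⟫ - ⟪x, b⟫ * ⟪w, c⟫| = |⟪M, w⟫| := by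
        rw [hM, inner_sub_left, real_inner_smul_left, real_inner_smul_left, real_inner_comm c w]
    _ ≤ ‖M‖ * ‖w‖ := abs_real_inner_le_norm M w
    _ ≤ C * √(s ^ 2 + ‖c‖ ^ 2) * ‖w‖ := by gcongr
    _ = C * (2 * √(s ^ 2 + ‖c‖ ^ 2) * ‖w‖ / 2) := by ring
    _ ≤ C * ((√(s ^ 2 + ‖c‖ ^ 2) ^ 2 + ‖w‖ ^ 2) / 2) := by gcongr; exact two_mul_le_add_sq _ _
    _ = C * ((‖c‖ ^ 2 + ‖w‖ ^ 2 + s ^ 2) / 2) := by rw [Real.sq_sqrt (by positivity)]; ring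

end InnerProductSpace

lemma norm_add_mul_abs_norm_sq_sub_le {E : Type*} [SeminormedAddCommGroup E] (w w' c c' : E) :
    ‖w + w'‖ * |‖c‖ ^ 2 - ‖c'‖ ^ 2|
      ≤ ‖c - c'‖ * ((‖c‖ ^ 2 + ‖w‖ ^ 2) + (‖c'‖ ^ 2 + ‖w'‖ ^ 2)) :=
  calc ‖w + w'‖ * |‖c‖ ^ 2 - ‖c'‖ ^ 2| = ‖w + w'‖ * ((‖c‖ + ‖c'‖) * |‖c‖ - ‖c'‖|) := by
        rw [sq_sub_sq, abs_mul, abs_of_nonneg (by positivity : 0 ≤ ‖c‖ + ‖c'‖)]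
    _ ≤ (‖w‖ + ‖w'‖) * ((‖c‖ + ‖c'‖) * ‖c - c'‖) := by
        gcongr
        exacts [norm_add_le w w', abs_norm_sub_norm_le c c']
    _ = ‖c - c'‖ * ((‖w‖ + ‖w'‖) * (‖c‖ + ‖c'‖)) := by ring
    _ ≤ ‖c - c'‖ * ((‖c‖ ^ 2 + ‖w‖ ^ 2) + (‖c'‖ ^ 2 + ‖w'‖ ^ 2)) := by
        gcongr
        linarith [two_mul_le_add_sq ‖w‖ ‖c‖, two_mul_le_add_sq ‖w‖ ‖c'‖,
          two_mul_le_add_sq ‖w'‖ ‖c‖, two_mul_le_add_sq ‖w'‖ ‖c'‖]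

lemma larger_root_bounds_and_eq {A b h l : ℝ} (hA : 0 ≤ A) (hh : h ≤ b)
    (hl : l = (A + b + √((A + b) ^ 2 - 4 * A * h)) / 2) :
    A ≤ l ∧ b ≤ l ∧ (l - A) * (l - b) = A * (b - h) := by
  have hdisc : (A - b) ^ 2 ≤ (A + b) ^ 2 - 4 * A * h := by
    linarith [mul_nonneg hA (sub_nonneg.2 hh)]
  have hsq := Real.sq_sqrt ((sq_nonneg _).trans hdisc)
  have habs := abs_le.1 (Real.abs_le_sqrt hdisc)
  rw [hl]
  exact ⟨by linarith, by linarith, by linear_combination hsq / 4⟩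

section Direction

open scoped RealInnerProductSpace

variable {d : ℕ} (hd : d ≤ 3) (ξ : Fin d → ℝ)

/-- The direction `ξ ∈ ℝ^d` as a vector of Euclidean `ℝ³`, padded by zeros; it turns `dirDot` into
an inner product. -/
def embedDir : EuclideanSpace ℝ (Fin 3) :=
  WithLp.toLp 2 (Function.extend (Fin.castLE hd) ξ 0)

lemma embedDir_castLE (k : Fin d) : embedDir hd ξ (Fin.castLE hd k) = ξ k :=
  (Fin.castLE_injective hd).extend_apply ξ 0 k

lemma embedDir_eq_zero {j : Fin 3} (hj : j ∉ Set.range (Fin.castLE hd)) : embedDir hd ξ j = 0 :=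
  Function.extend_apply' ξ (0 : Fin 3 → ℝ) j hj

lemma dot3_eq_inner (a b : Fin 3 → ℝ) : dot3 a b = ⟪WithLp.toLp 2 a, WithLp.toLp 2 b⟫ := by
  rw [EuclideanSpace.inner_toLp_toLp, star_trivial, dotProduct_comm]
  rfl

lemma sq3_eq_norm_sq (a : Fin 3 → ℝ) : sq3 a = ‖WithLp.toLp 2 a‖ ^ 2 := by
  rw [sq3, dot3_eq_inner, real_inner_self_eq_norm_sq]

lemma norm3_eq_norm (a : Fin 3 → ℝ) : norm3 a = ‖WithLp.toLp 2 a‖ := by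
  rw [norm3, sq3_eq_norm_sq, Real.sqrt_sq (norm_nonneg _)]

lemma dirDot_eq_inner (w : Fin 3 → ℝ) : dirDot hd ξ w = ⟪embedDir hd ξ, WithLp.toLp 2 w⟫ := by
  rw [show ⟪embedDir hd ξ, WithLp.toLp 2 w⟫ = ∑ j, embedDir hd ξ j * w j from
    (dot3_eq_inner (embedDir hd ξ).ofLp w).symm]
  refine Fintype.sum_of_injective _ (Fin.castLE_injective hd) _ _ (fun j hj => ?_) fun k => ?_
  · rw [embedDir_eq_zero hd ξ hj, zero_mul]
  · rw [embedDir_castLE]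

lemma norm_embedDir {ξ : Fin d → ℝ} (hξ : unitVec ξ) : ‖embedDir hd ξ‖ = 1 := by
  rw [← sq_eq_sq₀ (norm_nonneg _) zero_le_one, one_pow, EuclideanSpace.real_norm_sq_eq, ← hξ]
  refine (Fintype.sum_of_injective _ (Fin.castLE_injective hd) _ _ (fun j hj => ?_)
    fun k => ?_).symm
  · rw [embedDir_eq_zero hd ξ hj, zero_pow two_ne_zero]
  · rw [embedDir_castLE]

end Direction

section State

open scoped RealInnerProductSpace

variable {pfun : ℝ → ℝ → ℝ} {d : ℕ} (hd : d ≤ 3) (ξ : Fin d → ℝ) {U : MHDState}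
  (vs Bs : Fin 3 → ℝ)

/-- The magnetic field relative to a reference field `B*`, the first block of `√2 θ`. -/
def relField (U : MHDState) (Bs : Fin 3 → ℝ) : EuclideanSpace ℝ (Fin 3) :=
  WithLp.toLp 2 (magB U - Bs)

/-- The velocity relative to a reference velocity `v*`, weighted by `√ρ`: the second block of
`√2 θ`. -/
def relVel (U : MHDState) (vs : Fin 3 → ℝ) : EuclideanSpace ℝ (Fin 3) :=
  √(dens U) • WithLp.toLp 2 (vel U - vs)

/-- The Alfvén velocity `B / √ρ`. -/
def alfvenVel (U : MHDState) : EuclideanSpace ℝ (Fin 3) :=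
  (√(dens U))⁻¹ • WithLp.toLp 2 (magB U)

lemma norm_relVel_sq (hU : 0 < dens U) : ‖relVel U vs‖ ^ 2 = dens U * sq3 (vel U - vs) := by
  rw [relVel, norm_smul, mul_pow, Real.norm_eq_abs, sq_abs, Real.sq_sqrt hU.le, sq3_eq_norm_sq]

lemma norm_alfvenVel_sq (hU : 0 < dens U) : ‖alfvenVel U‖ ^ 2 = sq3 (magB U) / dens U := by
  rw [alfvenVel, norm_smul, mul_pow, norm_inv, inv_pow, Real.norm_eq_abs, sq_abs,
    Real.sq_sqrt hU.le, sq3_eq_norm_sq, inv_mul_eq_div]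

lemma inner_alfvenVel_sq (hU : 0 < dens U) :
    ⟪embedDir hd ξ, alfvenVel U⟫ ^ 2 = dirDot hd ξ (magB U) ^ 2 / dens U := by
  rw [alfvenVel, real_inner_smul_right, mul_pow, inv_pow, Real.sq_sqrt hU.le, dirDot_eq_inner,
    inv_mul_eq_div]

lemma thetaSq_eq (hU : U ∈ Gset) :
    thetaSq U vs Bs = (‖relField U Bs‖ ^ 2 + ‖relVel U vs‖ ^ 2 + 2 * intE U) / 2 := by
  have hE : 0 ≤ 2 * intE U := mul_nonneg zero_le_two hU.2.le
  rw [norm_relVel_sq vs hU.1, relField, ← sq3_eq_norm_sq]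
  simp only [thetaSq, theta, Fin.sum_univ_succ, Fin.sum_univ_zero, sq3, dot3, Pi.sub_apply,
    Matrix.cons_val_zero, Matrix.cons_val_succ, div_pow, mul_pow, Real.sq_sqrt hU.1.le,
    Real.sq_sqrt hE, Real.sq_sqrt zero_le_two, Fin.succ_zero_eq_one, Fin.succ_one_eq_two]
  ring

lemma thetaSq_nonneg (U : MHDState) (vs Bs : Fin 3 → ℝ) : 0 ≤ thetaSq U vs Bs :=
  Finset.sum_nonneg fun _ _ => sq_nonneg _

lemma norm_relField_sq_div_two_le_thetaSq (hU : U ∈ Gset) :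
    ‖relField U Bs‖ ^ 2 / 2 ≤ thetaSq U vs Bs := by
  rw [thetaSq_eq vs Bs hU]
  linarith [sq_nonneg ‖relVel U vs‖, hU.2]

lemma mom_eq_dens_smul_vel (hU : 0 < dens U) : mom U = dens U • vel U := by
  funext k
  exact (mul_div_cancel₀ (mom U k) hU.ne').symm

lemma toten_eq (hU : 0 < dens U) :
    toten U = dens U * sq3 (vel U) / 2 + sq3 (magB U) / 2 + intE U := by
  have hmom : sq3 (mom U) / dens U = dens U * sq3 (vel U) := by
    rw [mom_eq_dens_smul_vel hU, sq3_eq_norm_sq, sq3_eq_norm_sq, WithLp.toLp_smul, norm_smul,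
      mul_pow, Real.norm_eq_abs, sq_abs]
    field_simp
  rw [intE, hmom]
  ring

lemma dot8_mk_nstar (ρ E : ℝ) (m B : Fin 3 → ℝ) :
    dot8 (mk ρ m B E) (nstar vs Bs) = ρ * (sq3 vs / 2) - dot3 m vs - dot3 B Bs + E := by
  simp only [dot8, mk, nstar, dot3, Fin.sum_univ_succ, Fin.sum_univ_zero, Matrix.cons_val_zero,
    Matrix.cons_val_succ, Fin.succ_zero_eq_one, Fin.succ_one_eq_two]
  ring

lemma mk_eta (U : MHDState) : mk (dens U) (mom U) (magB U) (toten U) = U := by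
  funext i
  fin_cases i <;> rfl

lemma dot8_nstar_add (hU : U ∈ Gset) :
    dot8 U (nstar vs Bs) + sq3 Bs / 2 = thetaSq U vs Bs := by
  rw [← mk_eta U, dot8_mk_nstar, mk_eta, mom_eq_dens_smul_vel hU.1, toten_eq hU.1,
    thetaSq_eq vs Bs hU, norm_relVel_sq vs hU.1, relField, ← sq3_eq_norm_sq]
  simp only [sq3, dot3, Fin.sum_univ_three, Pi.sub_apply, Pi.smul_apply, smul_eq_mul]
  ring

lemma dot8_flux_nstar (hU : U ∈ Gset) (i : Fin 3) :
    dot8 (flux pfun i U) (nstar vs Bs)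
      = vel U i * (thetaSq U vs Bs - ‖relField U Bs‖ ^ 2 / 2
          + (pres pfun U + dot3 (magB U) (magB U - Bs)))
        + vs i * (‖relField U Bs‖ ^ 2 / 2 - sq3 Bs / 2
          - (pres pfun U + dot3 (magB U) (magB U - Bs)))
        + magB U i * (dot3 vs Bs - dot3 (vel U - vs) (magB U - Bs)) := by
  have hmom : dot3 (fun k => dens U * vel U i * vel U k - magB U i * magB U k
      + ptot pfun U * (if k = i then 1 else 0)) vs
      = dens U * vel U i * dot3 (vel U) vs - magB U i * dot3 (magB U) vs + ptot pfun U * vs i := by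
    simp only [dot3, add_mul, sub_mul, sum_add_distrib, sum_sub_distrib, mul_sum, mul_assoc,
      ite_mul, one_mul, zero_mul, mul_ite, mul_zero, sum_ite_eq', mem_univ, if_true]
  have hind : dot3 (fun k => vel U i * magB U k - magB U i * vel U k) Bs
      = vel U i * dot3 (magB U) Bs - magB U i * dot3 (vel U) Bs := by
    simp only [dot3, sub_mul, sum_sub_distrib, mul_sum, mul_assoc]
  rw [flux, dot8_mk_nstar, hmom, hind, toten_eq hU.1, ptot, thetaSq_eq vs Bs hU,
    norm_relVel_sq vs hU.1, relField, ← sq3_eq_norm_sq]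
  simp only [sq3, dot3, Fin.sum_univ_three, Pi.sub_apply]
  ring

lemma dot8_dirFlux (n : MHDState) :
    dot8 (dirFlux pfun hd ξ U) n = ∑ k, ξ k * dot8 (flux pfun (Fin.castLE hd k) U) n :=
  (sum_dotProduct _ _ _).trans (sum_congr rfl fun _ _ => smul_dotProduct _ _ _)

/-- The part of `⟨ξ, F(U)⟩ · n*` due to the pressure and the magnetic stress: what is left after
the transport of `|θ|²` is removed. -/
def waveFlux (pfun : ℝ → ℝ → ℝ) {d : ℕ} (hd : d ≤ 3) (ξ : Fin d → ℝ) (U : MHDState)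
    (vs Bs : Fin 3 → ℝ) : ℝ :=
  (pres pfun U + dot3 (magB U) (magB U - Bs)) * dirDot hd ξ (vel U - vs)
    - dirDot hd ξ (magB U) * dot3 (vel U - vs) (magB U - Bs)

lemma dirDot_sub (v w : Fin 3 → ℝ) :
    dirDot hd ξ (v - w) = dirDot hd ξ v - dirDot hd ξ w := by
  simp only [dirDot_eq_inner, WithLp.toLp_sub, inner_sub_right]

lemma dot8_dirFlux_nstar (hU : U ∈ Gset) :
    dot8 (dirFlux pfun hd ξ U) (nstar vs Bs)
      = dirDot hd ξ (vel U) * (thetaSq U vs Bs - ‖relField U Bs‖ ^ 2 / 2)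
        + dirDot hd ξ vs * (‖relField U Bs‖ ^ 2 / 2) + waveFlux pfun hd ξ U vs Bs
        + (dirDot hd ξ (magB U) * dot3 vs Bs - dirDot hd ξ vs * (sq3 Bs / 2)) := by
  have hsum : ∀ a b c : ℝ, ∑ k, ξ k * (vel U (Fin.castLE hd k) * a + vs (Fin.castLE hd k) * b
      + magB U (Fin.castLE hd k) * c)
      = dirDot hd ξ (vel U) * a + dirDot hd ξ vs * b + dirDot hd ξ (magB U) * c := fun a b c => by
    simp only [dirDot, mul_add, sum_add_distrib, sum_mul, mul_assoc]
  simp only [dot8_dirFlux, dot8_flux_nstar vs Bs hU, hsum, waveFlux, dirDot_sub]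
  ring

lemma pres_eq_soundC_mul (hU : U ∈ Gset) :
    pres pfun U = soundC pfun U * √(2 * intE U) * √(dens U) := by
  have hρ := hU.1
  have hE : 0 < 2 * intE U := mul_pos two_pos hU.2
  have hsqrt : dens U * √(2 * specE U) = √(2 * intE U) * √(dens U) := by
    rw [specE, ← mul_div_assoc, Real.sqrt_div hE.le, mul_div_left_comm, Real.div_sqrt]
  rw [soundC, hsqrt, mul_assoc, div_mul_cancel₀]
  positivity

lemma waveFlux_eq (hU : U ∈ Gset) :
    waveFlux pfun hd ξ U vs Bs
      = (soundC pfun U * √(2 * intE U) + ⟪alfvenVel U, relField U Bs⟫)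
          * ⟪embedDir hd ξ, relVel U vs⟫
        - ⟪embedDir hd ξ, alfvenVel U⟫ * ⟪relVel U vs, relField U Bs⟫ := by
  have hρ : 0 < √(dens U) := Real.sqrt_pos.2 hU.1
  rw [waveFlux, pres_eq_soundC_mul hU, dot3_eq_inner, dot3_eq_inner, dirDot_eq_inner,
    dirDot_eq_inner, alfvenVel, relVel, relField, real_inner_smul_left, real_inner_smul_left,
    real_inner_smul_right, real_inner_smul_right]
  field_simp

lemma waveC_sq_bounds_and_eq {ξ : Fin d → ℝ} (hξ : unitVec ξ) (hU : 0 < dens U) :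
    soundC pfun U ^ 2 ≤ waveC pfun hd ξ U ^ 2 ∧ ‖alfvenVel U‖ ^ 2 ≤ waveC pfun hd ξ U ^ 2 ∧
      (waveC pfun hd ξ U ^ 2 - soundC pfun U ^ 2) * (waveC pfun hd ξ U ^ 2 - ‖alfvenVel U‖ ^ 2)
        = soundC pfun U ^ 2 * (‖alfvenVel U‖ ^ 2 - ⟪embedDir hd ξ, alfvenVel U⟫ ^ 2) := by
  have hle : ⟪embedDir hd ξ, alfvenVel U⟫ ^ 2 ≤ ‖alfvenVel U‖ ^ 2 := by
    rw [← sub_nonneg, ← norm_sub_inner_smul_sq (norm_embedDir hd hξ)]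
    exact sq_nonneg _
  refine larger_root_bounds_and_eq (sq_nonneg _) hle ?_
  rw [waveC, Real.sq_sqrt, norm_alfvenVel_sq hU, inner_alfvenVel_sq hd ξ hU, mul_div_assoc]
  rw [← norm_alfvenVel_sq hU]
  positivity

lemma abs_waveFlux_le {ξ : Fin d → ℝ} (hξ : unitVec ξ) (hU : U ∈ Gset) :
    |waveFlux pfun hd ξ U vs Bs| ≤ waveC pfun hd ξ U * thetaSq U vs Bs := by
  obtain ⟨hsound, halfven, hroot⟩ := waveC_sq_bounds_and_eq (pfun := pfun) hd hξ hU.1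
  have hform := abs_wave_form_le (norm_embedDir hd hξ) (Real.sqrt_nonneg _) hsound halfven hroot.ge
    √(2 * intE U) (relField U Bs) (relVel U vs)
  rw [Real.sq_sqrt (mul_nonneg zero_le_two hU.2.le)] at hform
  rwa [waveFlux_eq hd ξ vs Bs hU, thetaSq_eq vs Bs hU]

lemma dot8_dirFlux_nstar_le {ξ : Fin d → ℝ} (hξ : unitVec ξ) (hU : U ∈ Gset) {μ m : ℝ}
    (hv : dirDot hd ξ (vel U) ≤ m) (hμ : μ ≤ m) :
    dot8 (dirFlux pfun hd ξ U) (nstar vs Bs)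
      ≤ (m + waveC pfun hd ξ U) * thetaSq U vs Bs
        + (dirDot hd ξ vs - μ) * (‖relField U Bs‖ ^ 2 / 2)
        + (dirDot hd ξ (magB U) * dot3 vs Bs - dirDot hd ξ vs * (sq3 Bs / 2)) := by
  have hkin := mul_le_mul_of_nonneg_right hv
    (sub_nonneg.2 (norm_relField_sq_div_two_le_thetaSq vs Bs hU))
  have hmag := mul_le_mul_of_nonneg_right hμ (div_nonneg (sq_nonneg ‖relField U Bs‖) zero_le_two)
  have hwave := (abs_le.1 (abs_waveFlux_le (pfun := pfun) hd vs Bs hξ hU)).2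
  rw [dot8_dirFlux_nstar hd ξ vs Bs hU]
  linarith

lemma le_dot8_dirFlux_nstar {ξ : Fin d → ℝ} (hξ : unitVec ξ) (hU : U ∈ Gset) {μ m : ℝ}
    (hv : m ≤ dirDot hd ξ (vel U)) (hμ : m ≤ μ) :
    (m - waveC pfun hd ξ U) * thetaSq U vs Bs
        + (dirDot hd ξ vs - μ) * (‖relField U Bs‖ ^ 2 / 2)
        + (dirDot hd ξ (magB U) * dot3 vs Bs - dirDot hd ξ vs * (sq3 Bs / 2))
      ≤ dot8 (dirFlux pfun hd ξ U) (nstar vs Bs) := by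
  have hkin := mul_le_mul_of_nonneg_right hv
    (sub_nonneg.2 (norm_relField_sq_div_two_le_thetaSq vs Bs hU))
  have hmag := mul_le_mul_of_nonneg_right hμ (div_nonneg (sq_nonneg ‖relField U Bs‖) zero_le_two)
  have hwave := (abs_le.1 (abs_waveFlux_le (pfun := pfun) hd vs Bs hξ hU)).1
  rw [dot8_dirFlux_nstar hd ξ vs Bs hU]
  linarith

lemma roeV_comm (U V : MHDState) : roeV U V = roeV V U := by
  funext k
  simp only [roeV, add_comm]

lemma toLp_roeV_sub {V : MHDState} (hU : 0 < dens U) :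
    WithLp.toLp 2 (roeV U V - vs)
      = (√(dens U) + √(dens V))⁻¹ • (relVel U vs + relVel V vs) := by
  have hsum : √(dens U) + √(dens V) ≠ 0 := by positivity
  ext k
  simp only [Pi.sub_apply, roeV, relVel, WithLp.toLp_sub, smul_add, PiLp.add_apply,
    PiLp.smul_apply, PiLp.sub_apply, smul_eq_mul]
  field_simp
  ring

lemma abs_dirDot_sub_roeV_le {ξ : Fin d → ℝ} (hξ : unitVec ξ) {V : MHDState}
    (hU : 0 < dens U) :
    |dirDot hd ξ vs - dirDot hd ξ (roeV U V)|
      ≤ (√(dens U) + √(dens V))⁻¹ * ‖relVel U vs + relVel V vs‖ := by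
  set r := √(dens U) + √(dens V)
  have hr0 : 0 ≤ r := add_nonneg (Real.sqrt_nonneg _) (Real.sqrt_nonneg _)
  calc |dirDot hd ξ vs - dirDot hd ξ (roeV U V)|
      = |⟪embedDir hd ξ, r⁻¹ • (relVel U vs + relVel V vs)⟫| := by
        rw [abs_sub_comm, ← dirDot_sub, dirDot_eq_inner, toLp_roeV_sub vs hU]
    _ ≤ ‖embedDir hd ξ‖ * ‖r⁻¹ • (relVel U vs + relVel V vs)‖ := abs_real_inner_le_norm _ _
    _ = r⁻¹ * ‖relVel U vs + relVel V vs‖ := by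
        rw [norm_embedDir hd hξ, one_mul, norm_smul, Real.norm_of_nonneg (inv_nonneg.2 hr0)]

lemma transport_jump_le {ξ : Fin d → ℝ} (hξ : unitVec ξ) {V : MHDState} (hU : U ∈ Gset)
    (hV : V ∈ Gset) :
    (dirDot hd ξ vs - dirDot hd ξ (roeV U V))
        * (‖relField U Bs‖ ^ 2 / 2 - ‖relField V Bs‖ ^ 2 / 2)
      ≤ norm3 (magB U - magB V) / (√(dens U) + √(dens V))
        * (thetaSq U vs Bs + thetaSq V vs Bs) := by
  set r := √(dens U) + √(dens V)
  have hfield : norm3 (magB U - magB V) = ‖relField U Bs - relField V Bs‖ := by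
    rw [norm3_eq_norm, relField, relField, ← WithLp.toLp_sub, sub_sub_sub_cancel_right]
  have hvel : |dirDot hd ξ vs - dirDot hd ξ (roeV U V)| ≤ r⁻¹ * ‖relVel U vs + relVel V vs‖ :=
    abs_dirDot_sub_roeV_le hd vs hξ hU.1
  have hjump := norm_add_mul_abs_norm_sq_sub_le (relVel U vs) (relVel V vs)
    (relField U Bs) (relField V Bs)
  calc (dirDot hd ξ vs - dirDot hd ξ (roeV U V))
          * (‖relField U Bs‖ ^ 2 / 2 - ‖relField V Bs‖ ^ 2 / 2)
      ≤ |dirDot hd ξ vs - dirDot hd ξ (roeV U V)|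
          * |‖relField U Bs‖ ^ 2 / 2 - ‖relField V Bs‖ ^ 2 / 2| :=
        (le_abs_self _).trans (abs_mul _ _).le
    _ ≤ r⁻¹ * ‖relVel U vs + relVel V vs‖
          * |‖relField U Bs‖ ^ 2 / 2 - ‖relField V Bs‖ ^ 2 / 2| := by gcongr
    _ = r⁻¹ / 2 * (‖relVel U vs + relVel V vs‖
          * |‖relField U Bs‖ ^ 2 - ‖relField V Bs‖ ^ 2|) := by
        rw [← sub_div, abs_div, abs_two]; ring
    _ ≤ r⁻¹ / 2 * (‖relField U Bs - relField V Bs‖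
          * (‖relField U Bs‖ ^ 2 + ‖relVel U vs‖ ^ 2
            + (‖relField V Bs‖ ^ 2 + ‖relVel V vs‖ ^ 2))) := by gcongr
    _ ≤ r⁻¹ / 2 * (‖relField U Bs - relField V Bs‖
          * (2 * (thetaSq U vs Bs + thetaSq V vs Bs))) := by
        gcongr
        rw [thetaSq_eq vs Bs hU, thetaSq_eq vs Bs hV]
        linarith [hU.2, hV.2]
    _ = norm3 (magB U - magB V) / r * (thetaSq U vs Bs + thetaSq V vs Bs) := by
        rw [hfield]; ring

lemma soundC_pos (hEOS : IsEOS pfun) (hU : U ∈ Gset) : 0 < soundC pfun U := by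
  have he : 0 < specE U := div_pos hU.2 hU.1
  exact div_pos ((hEOS _ _ hU.1).1 he) (mul_pos hU.1 (Real.sqrt_pos.2 (mul_pos two_pos he)))

lemma waveC_pos (hEOS : IsEOS pfun) {ξ : Fin d → ℝ} (hξ : unitVec ξ) (hU : U ∈ Gset) :
    0 < waveC pfun hd ξ U := by
  have hsq : 0 < waveC pfun hd ξ U ^ 2 :=
    (pow_pos (soundC_pos hEOS hU) 2).trans_le (waveC_sq_bounds_and_eq hd hξ hU.1).1
  exact (Real.sqrt_nonneg _).lt_of_ne' (sq_pos_iff.1 hsq)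

lemma field_jump_nonneg (U V : MHDState) :
    0 ≤ norm3 (magB U - magB V) / (√(dens U) + √(dens V)) :=
  div_nonneg (Real.sqrt_nonneg _) (add_nonneg (Real.sqrt_nonneg _) (Real.sqrt_nonneg _))

lemma field_jump_comm (U V : MHDState) :
    norm3 (magB U - magB V) / (√(dens U) + √(dens V))
      = norm3 (magB V - magB U) / (√(dens V) + √(dens U)) := by
  rw [norm3_eq_norm, norm3_eq_norm, WithLp.toLp_sub, WithLp.toLp_sub, norm_sub_rev, add_comm]

lemma max_lt_alphaR (hEOS : IsEOS pfun) {ξ : Fin d → ℝ} (hξ : unitVec ξ) (hU : U ∈ Gset)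
    (V : MHDState) :
    max (dirDot hd ξ (vel U)) (dirDot hd ξ (roeV U V)) < alphaR pfun hd ξ U V := by
  rw [alphaR]
  linarith [waveC_pos hd hEOS hξ hU, field_jump_nonneg U V]

lemma alphaL_lt_min (hEOS : IsEOS pfun) {ξ : Fin d → ℝ} (hξ : unitVec ξ) (hU : U ∈ Gset)
    (V : MHDState) :
    alphaL pfun hd ξ U V < min (dirDot hd ξ (vel U)) (dirDot hd ξ (roeV U V)) := by
  rw [alphaL]
  linarith [waveC_pos hd hEOS hξ hU, field_jump_nonneg U V]

lemma alphaL_lt_alphaR (hEOS : IsEOS pfun) {ξ : Fin d → ℝ} (hξ : unitVec ξ) {V : MHDState}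
    (hU : U ∈ Gset) (hV : V ∈ Gset) : alphaL pfun hd ξ V U < alphaR pfun hd ξ U V :=
  calc alphaL pfun hd ξ V U < dirDot hd ξ (roeV V U) :=
        (lt_min_iff.1 (alphaL_lt_min hd hEOS hξ hV U)).2
    _ = dirDot hd ξ (roeV U V) := by rw [roeV_comm]
    _ < alphaR pfun hd ξ U V := (max_lt_iff.1 (max_lt_alphaR hd hEOS hξ hU V)).2

lemma alphaR_le_alphaS (U V : MHDState) : alphaR pfun hd ξ U V ≤ alphaS pfun hd ξ U V := by
  rw [alphaR, alphaS]
  gcongr <;> exact le_abs_self _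

lemma neg_alphaS_le_alphaL (U V : MHDState) : -alphaS pfun hd ξ U V ≤ alphaL pfun hd ξ U V := by
  have hmin : -max |dirDot hd ξ (vel U)| |dirDot hd ξ (roeV U V)|
      ≤ min (dirDot hd ξ (vel U)) (dirDot hd ξ (roeV U V)) :=
    le_min ((neg_le_neg (le_max_left _ _)).trans (neg_abs_le _))
      ((neg_le_neg (le_max_right _ _)).trans (neg_abs_le _))
  rw [alphaS, alphaL]
  linarith

section TwoState

variable {Um Up : MHDState} {σm σp : ℝ}

lemma dens_dirFlux (U : MHDState) :
    dens (dirFlux pfun hd ξ U) = dens U * dirDot hd ξ (vel U) := by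
  rw [dens, dirFlux, Finset.sum_apply, dirDot, mul_sum]
  exact sum_congr rfl fun k _ => mul_left_comm _ _ _

lemma dens_hllMid : dens (hllMid pfun hd ξ Um Up σm σp)
    = (σp - σm)⁻¹ * (dens Up * (σp - dirDot hd ξ (vel Up))
      + dens Um * (dirDot hd ξ (vel Um) - σm)) := by
  have hm : dirFlux pfun hd ξ Um 0 = _ := dens_dirFlux hd ξ Um
  have hp : dirFlux pfun hd ξ Up 0 = _ := dens_dirFlux hd ξ Up
  simp only [dens] at hm hp ⊢
  simp only [hllMid, Pi.smul_apply, Pi.add_apply, Pi.sub_apply, smul_eq_mul, hm, hp]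
  ring

lemma hllMid_mem_Grho (hUm : 0 < dens Um) (hUp : 0 < dens Up) (hσ : σm < σp)
    (hσm : σm < dirDot hd ξ (vel Um)) (hσp : dirDot hd ξ (vel Up) < σp) :
    hllMid pfun hd ξ Um Up σm σp ∈ Grho := by
  rw [Grho, Set.mem_ofPred_eq, dens_hllMid]
  exact mul_pos (inv_pos.2 (sub_pos.2 hσ)) (add_pos (mul_pos hUp (sub_pos.2 hσp))
    (mul_pos hUm (sub_pos.2 hσm)))

lemma dot8_hllMid (n : MHDState) :
    dot8 (hllMid pfun hd ξ Um Up σm σp) n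
      = (σp - σm)⁻¹ * (σp * dot8 Up n - dot8 (dirFlux pfun hd ξ Up) n
        - σm * dot8 Um n + dot8 (dirFlux pfun hd ξ Um) n) := by
  have hdot : ∀ V : MHDState, dot8 V n = V ⬝ᵥ n := fun _ => rfl
  simp only [hdot, hllMid, smul_dotProduct, add_dotProduct, sub_dotProduct, smul_eq_mul]

lemma hll_energy_nonneg {ξ : Fin d → ℝ} (hξ : unitVec ξ) (hUm : Um ∈ Gset) (hUp : Up ∈ Gset)
    (hσm : σm ≤ alphaL pfun hd ξ Um Up) (hσp : alphaR pfun hd ξ Up Um ≤ σp) :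
    0 ≤ σp * thetaSq Up vs Bs - dot8 (dirFlux pfun hd ξ Up) (nstar vs Bs)
      - σm * thetaSq Um vs Bs + dot8 (dirFlux pfun hd ξ Um) (nstar vs Bs)
      + dot3 vs Bs * (dirDot hd ξ (magB Up) - dirDot hd ξ (magB Um)) := by
  have hfluxp := dot8_dirFlux_nstar_le (pfun := pfun) hd vs Bs hξ hUp
    (le_max_left (dirDot hd ξ (vel Up)) (dirDot hd ξ (roeV Up Um))) (le_max_right _ _)
  have hfluxm := le_dot8_dirFlux_nstar (pfun := pfun) hd vs Bs hξ hUm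
    (min_le_left (dirDot hd ξ (vel Um)) (dirDot hd ξ (roeV Up Um))) (min_le_right _ _)
  have hjump := transport_jump_le hd vs Bs hξ hUp hUm
  have hspeedp := mul_le_mul_of_nonneg_right hσp (thetaSq_nonneg Up vs Bs)
  have hspeedm := mul_le_mul_of_nonneg_right hσm (thetaSq_nonneg Um vs Bs)
  rw [alphaR] at hspeedp
  rw [alphaL, roeV_comm, field_jump_comm] at hspeedm
  linarith

lemma dot8_hllMid_nstar_nonneg {ξ : Fin d → ℝ} (hξ : unitVec ξ) (hUm : Um ∈ Gset)
    (hUp : Up ∈ Gset) (hσ : σm < σp) (hσm : σm ≤ alphaL pfun hd ξ Um Up)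
    (hσp : alphaR pfun hd ξ Up Um ≤ σp) :
    0 ≤ dot8 (hllMid pfun hd ξ Um Up σm σp) (nstar vs Bs) + sq3 Bs / 2
      + dot3 vs Bs * (σp - σm)⁻¹ * (dirDot hd ξ (magB Up) - dirDot hd ξ (magB Um)) := by
  have hσ0 : 0 < σp - σm := sub_pos.2 hσ
  have hnonneg := mul_nonneg (inv_pos.2 hσ0).le
    (hll_energy_nonneg hd vs Bs hξ hUm hUp hσm hσp)
  rw [← dot8_nstar_add vs Bs hUp, ← dot8_nstar_add vs Bs hUm] at hnonneg
  rw [dot8_hllMid]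
  refine hnonneg.trans_eq ?_
  field_simp
  ring

end TwoState

end State

lemma mem_closure_GstarSet {U : MHDState} (hU : U ∈ Grho)
    (h : ∀ vs Bs : Fin 3 → ℝ, 0 ≤ dot8 U (nstar vs Bs) + sq3 Bs / 2) :
    U ∈ closure GstarSet := by
  have hcont : Continuous fun ε : ℝ => mk (dens U) (mom U) (magB U) (toten U + ε) := by
    unfold mk
    fun_prop
  have hlim : Filter.Tendsto (fun ε : ℝ => mk (dens U) (mom U) (magB U) (toten U + ε))
      (nhdsWithin 0 (Set.Ioi 0)) (nhds U) := by
    simpa only [add_zero, mk_eta] using hcont.continuousWithinAt.tendsto (x := (0 : ℝ))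
  refine mem_closure_of_tendsto hlim ?_
  filter_upwards [self_mem_nhdsWithin] with ε (hε : 0 < ε)
  refine ⟨hU, fun vs Bs => ?_⟩
  have hn := h vs Bs
  rw [← mk_eta U, dot8_mk_nstar] at hn
  rw [dot8_mk_nstar]
  linarith

theorem two_state_lf_estimate_general {pfun : ℝ → ℝ → ℝ} (hEOS : IsEOS pfun) {d : ℕ} (hd : d ≤ 3)
    {ξ : Fin d → ℝ} (hξ : unitVec ξ) {Um Up : MHDState} (hUm : Um ∈ Gset) (hUp : Up ∈ Gset)
    {σm σp : ℝ} (hσm : σm ≤ alphaL pfun hd ξ Um Up) (hσp : alphaR pfun hd ξ Up Um ≤ σp) :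
    σm < σp ∧ hllMid pfun hd ξ Um Up σm σp ∈ Grho ∧
      (∀ vs Bs : Fin 3 → ℝ,
        0 ≤ dot8 (hllMid pfun hd ξ Um Up σm σp) (nstar vs Bs) + sq3 Bs / 2
          + dot3 vs Bs * (σp - σm)⁻¹ * (dirDot hd ξ (magB Up) - dirDot hd ξ (magB Um))) ∧
      (dirDot hd ξ (magB Up) = dirDot hd ξ (magB Um) →
        hllMid pfun hd ξ Um Up σm σp ∈ closure GstarSet) := by
  have hσ : σm < σp := hσm.trans_lt ((alphaL_lt_alphaR hd hEOS hξ hUp hUm).trans_le hσp)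
  have hdens : hllMid pfun hd ξ Um Up σm σp ∈ Grho := hllMid_mem_Grho hd ξ hUm.1 hUp.1 hσ
    (hσm.trans_lt (lt_min_iff.1 (alphaL_lt_min hd hEOS hξ hUm Up)).1)
    ((max_lt_iff.1 (max_lt_alphaR hd hEOS hξ hUp Um)).1.trans_le hσp)
  have henergy := fun vs Bs => dot8_hllMid_nstar_nonneg hd vs Bs hξ hUm hUp hσ hσm hσp
  refine ⟨hσ, hdens, henergy, fun hB => mem_closure_GstarSet hdens fun vs Bs => ?_⟩
  simpa only [hB, sub_self, mul_zero, add_zero] using henergy vs Bs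

/-- Corollary 2.5 (two-state Lax–Friedrichs-type estimate). -/
theorem two_state_lf_estimate (pfun : ℝ → ℝ → ℝ) (hEOS : IsEOS pfun)
    {d : ℕ} (hd1 : 1 ≤ d) (hd : d ≤ 3) (ξ : Fin d → ℝ) (hξ : unitVec ξ)
    (U Ut : MHDState) (hU : U ∈ Gset) (hUt : Ut ∈ Gset)
    (α αt : ℝ) (hα : alphaS pfun hd ξ U Ut ≤ α) (hαt : alphaS pfun hd ξ Ut U ≤ αt) :
    0 < α + αt ∧
      ∀ Ubar : MHDState,
        Ubar = (α + αt)⁻¹ •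
            (α • U - dirFlux pfun hd ξ U + αt • Ut + dirFlux pfun hd ξ Ut) →
        Ubar ∈ Grho ∧
          (∀ vs Bs : Fin 3 → ℝ,
            0 ≤ dot8 Ubar (nstar vs Bs) + sq3 Bs / 2
              + dot3 vs Bs * (α + αt)⁻¹ *
                (dirDot hd ξ (magB U) - dirDot hd ξ (magB Ut))) ∧
          (dirDot hd ξ (magB U) = dirDot hd ξ (magB Ut) → Ubar ∈ closure GstarSet) := by
  have h := two_state_lf_estimate_general hEOS hd hξ hUt hU
    ((neg_le_neg hαt).trans (neg_alphaS_le_alphaL hd ξ Ut U))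
    ((alphaR_le_alphaS hd ξ U Ut).trans hα)
  simpa only [hllMid, sub_neg_eq_add, neg_smul, neg_lt_iff_pos_add, forall_eq] using h

end MHD
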